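/- Let n ≥ 3, n ≥ m ≥ 1, and let λ = (λ_1, ..., λ_k) be a partition of n+m+1 with λ_k = λ_{k−1} = 1. For any partial order on the vertices of the generalized spider GS_{n,(2,1^{m−1})} in which nonadjacent vertices are comparable, every special rim hook GS_{n,(2,1^{m−1})}-tabloid T of shape λ has at least one body vertex appearing in its tail; that is, the tail of T cannot contain only pendants. -/

import Mathlib

open scoped Classical

/-! ### Cells and Young diagrams -/

/-- A cell of a Young diagram: `(row, column)`, both 0-indexed, rows from the top. -/
abbrev Cell : Type := ℕ × ℕ

/-- The length of row `i` (0-indexed from the top) of the Young diagram of the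
partition `lam`, whose parts are arranged in weakly decreasing order. -/
def rowLen {N : ℕ} (lam : Nat.Partition N) (i : ℕ) : ℕ :=
  ((lam.parts.sort (· ≤ ·)).reverse).getD i 0

/-- The Young diagram of a partition, as a set of cells. -/
def diag {N : ℕ} (lam : Nat.Partition N) : Set Cell :=
  {c : Cell | c.2 < rowLen lam c.1}

/-- The number of rows (the length) of a partition. -/
def numRows {N : ℕ} (lam : Nat.Partition N) : ℕ := Multiset.card lam.parts

/-! ### Chromatic symmetric functions and Schur functions, as monomial-coefficient
functions.  A formal power series of bounded degree in the commuting variables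
`x_0, x_1, x_2, …` is recorded by the map sending an exponent vector `μ : ℕ → ℕ`
(only finitely many nonzero entries ever matter) to the coefficient of the monomial
`∏ i, x_i ^ μ i`.  Colors / tableau entries are positive integers, so the variable
`x_0` is never used. -/

/-- A proper coloring of `G` by positive integers. -/
def IsProperColoring {V : Type*} (G : SimpleGraph V) (f : V → ℕ) : Prop :=
  (∀ v, 0 < f v) ∧ ∀ u v, G.Adj u v → f u ≠ f v

/-- The coefficient of the monomial `∏ i, x_i ^ μ i` in the chromatic symmetric
function `X_G = ∑_{proper colorings f} ∏_{v} x_{f v}`. -/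
noncomputable def XCoeff {V : Type*} [Fintype V] (G : SimpleGraph V) (μ : ℕ → ℕ) : ℚ :=
  Nat.card {f : V → ℕ //
    IsProperColoring G f ∧ ∀ i, Nat.card {v : V // f v = i} = μ i}

/-- A semistandard Young tableau of shape `lam`: positive entries on the diagram
(normalized to `0` off the diagram), weakly increasing along rows, strictly
increasing down columns. -/
def IsSSYT {N : ℕ} (lam : Nat.Partition N) (t : Cell → ℕ) : Prop :=
  (∀ c, c ∉ diag lam → t c = 0) ∧ (∀ c ∈ diag lam, 0 < t c) ∧
  (∀ i j : ℕ, ((i, j + 1) : Cell) ∈ diag lam → t (i, j) ≤ t (i, j + 1)) ∧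
  (∀ i j : ℕ, ((i + 1, j) : Cell) ∈ diag lam → t (i, j) < t (i + 1, j))

/-- The coefficient of the monomial `∏ i, x_i ^ μ i` in the Schur function `s_lam`,
i.e. the number of SSYT of shape `lam` and weight `μ`. -/
noncomputable def schurFn {N : ℕ} (lam : Nat.Partition N) (μ : ℕ → ℕ) : ℚ :=
  Nat.card {t : Cell → ℕ // IsSSYT lam t ∧
    ∀ i, Nat.card {c : Cell // c ∈ diag lam ∧ t c = i} = μ i}

/-- The coefficient `[s_lam] f` of the Schur function `s_lam` in the (unique, when it
exists) expansion `f = ∑_{ν ⊢ N} c_ν s_ν` of a symmetric function `f`, homogeneous of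
degree `N`, given by its monomial coefficients. -/
noncomputable def sCoeff {N : ℕ} (f : (ℕ → ℕ) → ℚ) (lam : Nat.Partition N) : ℚ :=
  if h : ∃ c : Nat.Partition N →₀ ℚ, ∀ μ, f μ = c.sum fun ν a => a * schurFn ν μ
  then h.choose lam else 0

/-! ### Graphs: generalized nets, generalized spiders, disjoint unions -/

/-- The generalized net `GN_{n,m}`: the complete graph on the body `Fin n`, with a
pendant (`Sum.inr j`) attached to the anchor `Sum.inl j` for each `j : Fin m`. -/
def genNet (n m : ℕ) : SimpleGraph (Fin n ⊕ Fin m) :=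
  SimpleGraph.fromRel fun a b =>
    match a, b with
    | Sum.inl _, Sum.inl _ => True
    | Sum.inl i, Sum.inr j => (i : ℕ) = (j : ℕ)
    | Sum.inr _, _ => False

/-- The generalized spider `GS_{n,(2,1^{m-1})}`: the complete graph on the body
`Fin n`, a pendant `Sum.inr (Sum.inl j)` attached to the body vertex `Sum.inl j` for
each `j : Fin m`, and one extra vertex `Sum.inr (Sum.inr 0)` (the special pendant)
attached to the pendant `Sum.inr (Sum.inl 0)`, so that the body vertex `0` (the
special anchor) carries an attached path on two vertices. -/
def genSpider2 (n m : ℕ) : SimpleGraph (Fin n ⊕ (Fin m ⊕ Fin 1)) :=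
  SimpleGraph.fromRel fun a b =>
    match a, b with
    | Sum.inl _, Sum.inl _ => True
    | Sum.inl i, Sum.inr (Sum.inl j) => (i : ℕ) = (j : ℕ)
    | Sum.inr (Sum.inl j), Sum.inr (Sum.inr _) => (j : ℕ) = 0
    | _, _ => False

/-- Disjoint union of two simple graphs. -/
def disjUnion {α β : Type*} (G : SimpleGraph α) (H : SimpleGraph β) :
    SimpleGraph (α ⊕ β) :=
  SimpleGraph.fromRel fun a b =>
    match a, b with
    | Sum.inl a, Sum.inl b => G.Adj a b
    | Sum.inr a, Sum.inr b => H.Adj a b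
    | _, _ => False

/-- The one-vertex graph `K_1`. -/
def K1 : SimpleGraph (Fin 1) := ⊥

/-- The path (= complete graph) on two vertices `P_2`. -/
def P2 : SimpleGraph (Fin 2) := ⊤

/-! ### Operations on partitions -/

/-- `removeOnes lam t` is the partition `lam ∖ 1^t` obtained by deleting `t` parts
equal to `1` from `lam` (junk value if `lam` has fewer than `t` parts equal to `1`). -/
def removeOnes {N : ℕ} (lam : Nat.Partition N) (t : ℕ) : Nat.Partition (N - t) :=
  if h : Multiset.replicate t 1 ≤ lam.parts then
    { parts := lam.parts - Multiset.replicate t 1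
      parts_pos := fun hx =>
        lam.parts_pos (Multiset.mem_of_le (tsub_le_self) hx)
      parts_sum := by
        have h1 : (lam.parts - Multiset.replicate t 1) + Multiset.replicate t 1
            = lam.parts := tsub_add_cancel_of_le h
        have h2 := congrArg Multiset.sum h1
        rw [Multiset.sum_add, Multiset.sum_replicate, lam.parts_sum] at h2
        simp only [smul_eq_mul, mul_one] at h2
        omega }
  else Nat.Partition.indiscrete (N - t)

/-- The partition `(2^a, 1^b)` of `2*a + b`. -/
def twoOne (a b : ℕ) : Nat.Partition (2 * a + b) where
  parts := Multiset.replicate a 2 + Multiset.replicate b 1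
  parts_pos := by
    intro i hi
    rw [Multiset.mem_add] at hi
    rcases hi with hi | hi <;> · rw [Multiset.eq_of_mem_replicate hi]; omega
  parts_sum := by
    rw [Multiset.sum_add, Multiset.sum_replicate, Multiset.sum_replicate]
    simp only [smul_eq_mul, mul_one]
    omega

/-! ### Special rim hook `G`-tabloids -/

/-- Two cells are adjacent if they share an edge. -/
def cellAdj (c d : Cell) : Prop :=
  (c.1 = d.1 ∧ (c.2 + 1 = d.2 ∨ d.2 + 1 = c.2)) ∨
  (c.2 = d.2 ∧ (c.1 + 1 = d.1 ∨ d.1 + 1 = c.1))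

/-- A set of cells is (the diagram of) a Young diagram if it is closed under
decreasing either coordinate. -/
def IsYoungDiag (D : Set Cell) : Prop :=
  ∀ i j i' j' : ℕ, ((i, j) : Cell) ∈ D → i' ≤ i → j' ≤ j → ((i', j') : Cell) ∈ D

/-- A set of cells is connected (via edge-adjacency, within the set). -/
def CellConnected (S : Set Cell) : Prop :=
  ∀ c ∈ S, ∀ d ∈ S, Relation.ReflTransGen (fun a b => a ∈ S ∧ b ∈ S ∧ cellAdj a b) c d

/-- A border strip (= rim hook, as a set of cells): nonempty, connected, and
containing no 2×2 square of cells. -/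
def IsBorderStrip (H : Set Cell) : Prop :=
  H.Nonempty ∧ CellConnected H ∧
    ∀ i j : ℕ, ¬(((i, j) : Cell) ∈ H ∧ ((i + 1, j) : Cell) ∈ H ∧
      ((i, j + 1) : Cell) ∈ H ∧ ((i + 1, j + 1) : Cell) ∈ H)

/-- `H` is a rim hook of the Young diagram `D`: a border strip contained in `D`
whose removal leaves a Young diagram. -/
def IsRimHookOf (D H : Set Cell) : Prop :=
  H ⊆ D ∧ IsBorderStrip H ∧ IsYoungDiag (D \ H)

/-- `IsRemovalSeq L D` says that the sets of cells in the list `L` may be removed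
successively from the diagram `D`, each being a rim hook of what remains, with
nothing left at the end. -/
def IsRemovalSeq : List (Set Cell) → Set Cell → Prop
  | [], D => D = ∅
  | H :: L, D => IsRimHookOf D H ∧ IsRemovalSeq L (D \ H)

/-- A special rim hook `G`-tabloid of shape `lam`, with respect to an order `r` on
the vertices of `G`: the cells of the diagram of `lam` are filled bijectively with
the vertices of `G` (vertex `v` goes in cell `pos v`), and the diagram is tiled by
rim hooks, successively removable, each meeting the first column.  The rim hooks are
recorded by the labelling `hk`, which assigns to each vertex the topmost row in which
its rim hook meets the first column.  The vertices in each rim hook form a stable set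
of `G` and, read from the rim hook's (bottom) cell in the first column — i.e. in
increasing order of the diagonal index `column − row` — they increase with respect
to `r`. -/
structure SRHGTabloid {V : Type*} (G : SimpleGraph V) (r : V → V → Prop)
    {N : ℕ} (lam : Nat.Partition N) where
  /-- the cell occupied by each vertex -/
  pos : V → Cell
  /-- the label of the rim hook containing each vertex: the topmost row in which
  that rim hook meets the first column -/
  hk : V → ℕ
  pos_inj : Function.Injective pos
  pos_range : Set.range pos = diag lam
  hk_mem : ∀ v, ((hk v, 0) : Cell) ∈ pos '' {u | hk u = hk v}
  hk_min : ∀ v i, ((i, 0) : Cell) ∈ pos '' {u | hk u = hk v} → hk v ≤ i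
  removal : ∃ L : List ℕ, L.Nodup ∧ (∀ i, i ∈ L ↔ ∃ v, hk v = i) ∧
    IsRemovalSeq (L.map fun i => pos '' {u | hk u = i}) (diag lam)
  stable : ∀ u v, hk u = hk v → u ≠ v → ¬G.Adj u v
  increasing : ∀ u v, hk u = hk v →
    ((pos u).2 : ℤ) - ((pos u).1 : ℤ) < ((pos v).2 : ℤ) - ((pos v).1 : ℤ) → r u v

/-- The sign of a special rim hook `G`-tabloid: `(-1)` to the total number of north
steps, where a rim hook spanning `k` rows contributes `k - 1` north steps. -/
noncomputable def tabSign {V : Type*} {G : SimpleGraph V} {r : V → V → Prop}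
    {N : ℕ} {lam : Nat.Partition N} (T : SRHGTabloid G r lam) : ℤ :=
  (-1) ^ ∑ i ∈ Finset.range N,
    ({a : ℕ | ∃ v, T.hk v = i ∧ (T.pos v).1 = a}.ncard - 1)

/-- The cells of the head of a tabloid of shape `lam`: the rows of length `≥ 2`. -/
def headCells {N : ℕ} (lam : Nat.Partition N) : Set Cell :=
  {c : Cell | c ∈ diag lam ∧ 2 ≤ rowLen lam c.1}

/-- The cells of the tail of a tabloid of shape `lam`: the rows of length `1`. -/
def tailCells {N : ℕ} (lam : Nat.Partition N) : Set Cell :=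
  {c : Cell | c ∈ diag lam ∧ rowLen lam c.1 = 1}

/-- Two special rim hook `G`-tabloids have the same head: the same cells of the head
are occupied by the same vertices, and the rim hook structure restricted to the head
agrees. -/
def SameHead {V : Type*} {G : SimpleGraph V} {r : V → V → Prop} {N : ℕ}
    {lam : Nat.Partition N} (T T' : SRHGTabloid G r lam) : Prop :=
  (∀ v, T.pos v ∈ headCells lam ↔ T'.pos v ∈ headCells lam) ∧
  (∀ v, T.pos v ∈ headCells lam → T.pos v = T'.pos v) ∧
  (∀ u v, T.pos u ∈ headCells lam → T.pos v ∈ headCells lam →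
    (T.hk u = T.hk v ↔ T'.hk u = T'.hk v))

/-! Body vertices are pairwise adjacent, so they lie in distinct rim hooks. If they all lay in the
head, then so would the topmost first-column cell of each of these rim hooks: a connected set can
leave a row of length `1` only vertically, along the first column. That gives `n` rows of length at
least `2`, which together with two rows of length `1` need `2 * n + 2 > n + m + 1` cells. -/

section RowLengths

variable {N : ℕ} (lam : Nat.Partition N)

theorem rowLen_antitone : Antitone (rowLen lam) := by
  intro i j hij
  have hsorted : (lam.parts.sort (· ≤ ·)).reverse.Pairwise (· ≥ ·) :=
    List.pairwise_reverse.2 (Multiset.pairwise_sort _ _)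
  unfold rowLen
  by_cases hj : j < (lam.parts.sort (· ≤ ·)).reverse.length
  · rw [List.getD_eq_getElem _ _ hj, List.getD_eq_getElem _ _ (hij.trans_lt hj)]
    exact hsorted.sortedGE.getElem_ge_getElem_of_le hij
  · rw [List.getD_eq_default _ _ (not_lt.1 hj)]
    exact Nat.zero_le _

theorem rowLen_eq_zero_of_numRows_le {i : ℕ} (hi : numRows lam ≤ i) : rowLen lam i = 0 :=
  List.getD_eq_default _ _ (by simpa [numRows] using hi)

theorem map_rowLen_range_numRows :
    (Multiset.range (numRows lam)).map (rowLen lam) = lam.parts := by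
  have hlist : (List.range (numRows lam)).map (rowLen lam) =
      (lam.parts.sort (· ≤ ·)).reverse :=
    List.ext_getElem (by simp [numRows]) fun i _ hi => by
      rw [List.getElem_map, List.getElem_range, rowLen, List.getD_eq_getElem _ _ hi]
  rw [← Multiset.coe_range, Multiset.map_coe, hlist, Multiset.coe_reverse, Multiset.sort_eq]

theorem card_filter_rowLen (p : ℕ → Prop) [DecidablePred p] :
    ((Finset.range (numRows lam)).filter fun i => p (rowLen lam i)).card =
      lam.parts.countP p := by
  conv_rhs => rw [← map_rowLen_range_numRows lam]
  rw [Multiset.countP_map]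
  rfl

end RowLengths

theorem two_mul_countP_two_le_add_count_one_le_sum (s : Multiset ℕ) :
    2 * s.countP (2 ≤ ·) + s.count 1 ≤ s.sum := by
  induction s using Multiset.induction with
  | empty => simp
  | cons a s ih =>
    rw [Multiset.countP_cons, Multiset.count_cons, Multiset.sum_cons]
    split_ifs <;> omega

theorem CellConnected.exists_cellAdj {S : Set Cell} (hS : CellConnected S) {P : Cell → Prop}
    {c d : Cell} (hc : c ∈ S) (hd : d ∈ S) (hPc : P c) (hPd : ¬P d) :
    ∃ a ∈ S, ∃ b ∈ S, cellAdj a b ∧ P a ∧ ¬P b := by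
  by_contra! hclosed
  exact hPd <| (hS c hc d hd).rec (motive := fun e _ => P e) hPc
    fun _ ⟨ha, hb, hab⟩ hPa => hclosed _ ha _ hb hab hPa

theorem IsRemovalSeq.isBorderStrip {L : List (Set Cell)} {D H : Set Cell}
    (hL : IsRemovalSeq L D) (hH : H ∈ L) : IsBorderStrip H := by
  induction L generalizing D with
  | nil => exact absurd hH List.not_mem_nil
  | cons K L ih =>
    rcases List.mem_cons.1 hH with rfl | hH
    · exact hL.1.2.1
    · exact ih hL.2 hH

namespace SRHGTabloid

variable {V : Type*} {G : SimpleGraph V} {r : V → V → Prop} {N : ℕ} {lam : Nat.Partition N}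
  (T : SRHGTabloid G r lam)

/-- The set of cells of the rim hook of `T` labelled by the row `i`, i.e. the rim hook whose
topmost cell in the first column is `(i, 0)`; empty if there is no such rim hook. -/
def hook (i : ℕ) : Set Cell :=
  T.pos '' {u | T.hk u = i}

theorem pos_mem_hook (v : V) : T.pos v ∈ T.hook (T.hk v) :=
  ⟨v, rfl, rfl⟩

theorem pos_mem_diag (v : V) : T.pos v ∈ diag lam :=
  T.pos_range ▸ Set.mem_range_self v

theorem hook_subset_diag (i : ℕ) : T.hook i ⊆ diag lam :=
  T.pos_range ▸ Set.image_subset_range _ _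

theorem isBorderStrip_hook (v : V) : IsBorderStrip (T.hook (T.hk v)) := by
  obtain ⟨L, -, hL, hremoval⟩ := T.removal
  exact hremoval.isBorderStrip (List.mem_map.2 ⟨T.hk v, (hL _).2 ⟨v, rfl⟩, rfl⟩)

theorem two_le_rowLen_hk {v : V} (hv : 2 ≤ rowLen lam (T.pos v).1) :
    2 ≤ rowLen lam (T.hk v) := by
  by_contra! hshort
  obtain ⟨a, ha, b, hb, hab, hrow_a, hrow_b⟩ :=
    (T.isBorderStrip_hook v).2.1.exists_cellAdj (P := fun c => rowLen lam c.1 < 2)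
      (T.hk_mem v) (T.pos_mem_hook v) hshort hv.not_gt
  have ha_col : a.2 = 0 := by
    have : a.2 < rowLen lam a.1 := T.hook_subset_diag _ ha
    omega
  have hb_col : b.2 = 0 := by
    rcases hab with ⟨hrow, -⟩ | ⟨hcol, -⟩
    · exact absurd (hrow ▸ hrow_a) hrow_b
    · exact hcol ▸ ha_col
  have hk_le : T.hk v ≤ b.1 := T.hk_min v b.1 (hb_col ▸ hb)
  exact hrow_b ((rowLen_antitone lam hk_le).trans_lt hshort)

theorem injOn_hk_of_isClique {s : Set V} (hs : G.IsClique s) : Set.InjOn T.hk s := by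
  intro u hu v hv huv
  by_contra hne
  exact T.stable u v huv hne (hs hu hv hne)

theorem card_le_countP_of_isClique {s : Finset V} (hs : G.IsClique s)
    (hhead : ∀ v ∈ s, 2 ≤ rowLen lam (T.pos v).1) : s.card ≤ lam.parts.countP (2 ≤ ·) := by
  rw [← card_filter_rowLen]
  refine Finset.card_le_card_of_injOn T.hk (fun v hv => ?_) (T.injOn_hk_of_isClique hs)
  have hlong : 2 ≤ rowLen lam (T.hk v) := T.two_le_rowLen_hk (hhead v hv)
  refine Finset.mem_filter.2 ⟨Finset.mem_range.2 ?_, hlong⟩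
  by_contra! hrow
  have := rowLen_eq_zero_of_numRows_le lam hrow
  omega

end SRHGTabloid

theorem isClique_range_inl_genSpider2 (n m : ℕ) :
    (genSpider2 n m).IsClique (Set.range Sum.inl) := by
  rintro _ ⟨i, rfl⟩ _ ⟨j, rfl⟩ hne
  exact (SimpleGraph.fromRel_adj _ _ _).2 ⟨hne, Or.inl trivial⟩

theorem tail_not_only_pendants_genSpider_general {V : Type*} {G : SimpleGraph V}
    {r : V → V → Prop} {N : ℕ} {lam : Nat.Partition N} (T : SRHGTabloid G r lam)
    {s : Finset V} (hs : G.IsClique s) (hN : N < 2 * s.card + lam.parts.count 1) :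
    ∃ v ∈ s, rowLen lam (T.pos v).1 = 1 := by
  by_contra! htail
  have hhead : ∀ v ∈ s, 2 ≤ rowLen lam (T.pos v).1 := by
    intro v hv
    have hpos : (T.pos v).2 < rowLen lam (T.pos v).1 := T.pos_mem_diag v
    have := htail v hv
    omega
  have hrows := T.card_le_countP_of_isClique hs hhead
  have hcells := two_mul_countP_two_le_add_count_one_le_sum lam.parts
  rw [lam.parts_sum] at hcells
  omega

/-- For `n ≥ 3`, `n ≥ m ≥ 1`, and a partition `lam` of `n + m + 1`
whose last two parts equal `1`, for any partial order on the vertices of the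
generalized spider `GS_{n,(2,1^{m-1})}` in which nonadjacent vertices are comparable,
every special rim hook `GS_{n,(2,1^{m-1})}`-tabloid of shape `lam` has at least one
body vertex in its tail (the rows of length `1`); the tail cannot contain only
pendants. -/
theorem tail_not_only_pendants_genSpider (n m : ℕ) (hn : 3 ≤ n) (hm : 1 ≤ m)
    (hmn : m ≤ n)
    (lam : Nat.Partition (n + m + 1)) (hones : 2 ≤ lam.parts.count 1)
    (po : PartialOrder (Fin n ⊕ (Fin m ⊕ Fin 1)))
    (hcomp : ∀ u v, ¬(genSpider2 n m).Adj u v → po.le u v ∨ po.le v u)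
    (T : SRHGTabloid (genSpider2 n m) po.le lam) :
    ∃ v : Fin n, rowLen lam (T.pos (Sum.inl v)).1 = 1 := by
  have hbody : (genSpider2 n m).IsClique (Finset.univ.map (Function.Embedding.inl (α := Fin n))
      : Finset (Fin n ⊕ (Fin m ⊕ Fin 1))) := by
    simpa using isClique_range_inl_genSpider2 n m
  simpa using tail_not_only_pendants_genSpider_general T hbody (by simp; omega)
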